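/- Let k be a positive natural number, v > 0, m, m' : Fin k → ℝ, and α > 1. Let μ be the product measure on ℝ^k whose i-th factor is gaussianReal (m i) v, and let ν be the product measure whose i-th factor is gaussianReal (m' i) v. Then μ is absolutely continuous with respect to ν and D_α(μ ‖ ν) = α · (∑_{i} (m i − m' i)²) / (2v). (This is the multivariate Gaussian mechanism fact underlying the private-gradient step of the paper's Algorithm: adding noise N(0, σ²C₁² I_{k×k}) to a vector of ℓ₂-sensitivity C₁ gives (α, α/(2σ²))-RDP.) -/

import Mathlib

open MeasureTheory ProbabilityTheory Real
open scoped ENNReal NNReal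

/-- Rényi divergence of order `α`:
`D_α(μ‖ν) = (α−1)⁻¹ · log ∫ (dμ/dν)^α dν`. -/
noncomputable def renyiDiv {Ω : Type*} [MeasurableSpace Ω] (α : ℝ) (μ ν : Measure Ω) : ℝ :=
  (α - 1)⁻¹ * Real.log ((∫⁻ x, μ.rnDeriv ν x ^ α ∂ν).toReal)

/-!
The Hellinger integral `∫ (dμ/dν)^α dν` is multiplicative over products, because the density of a
product measure is the product of the densities; hence Rényi divergence is additive over
coordinates. In one dimension, `N(a, v)` is the exponential tilt of `N(b, v)` with parameter
`t = (a - b) / v`. A tilt has density `exp (t X - cgf t)`, so its Hellinger integral is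
`exp (cgf (α t) - α cgf t)`; for the Gaussian, `cgf s = b s + v s² / 2` makes the exponent equal to
`α (α - 1) v t² / 2`.
-/

/-- The Hellinger integral `∫ (dμ/dν)^α dν` of order `α`, whose normalized logarithm is the Rényi
divergence. It is `ℝ≥0∞`-valued, so that divergence to `∞` is visible. -/
noncomputable def hellingerIntegral {Ω : Type*} [MeasurableSpace Ω] (α : ℝ) (μ ν : Measure Ω) :
    ℝ≥0∞ :=
  ∫⁻ x, μ.rnDeriv ν x ^ α ∂ν

lemma renyiDiv_eq_log_hellingerIntegral {Ω : Type*} [MeasurableSpace Ω] (α : ℝ)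
    (μ ν : Measure Ω) :
    renyiDiv α μ ν = (α - 1)⁻¹ * log (hellingerIntegral α μ ν).toReal :=
  rfl

lemma hellingerIntegral_ne_zero {Ω : Type*} [MeasurableSpace Ω] {μ ν : Measure Ω} [SigmaFinite μ]
    [SigmaFinite ν] [NeZero μ] (hμν : μ ≪ ν) (α : ℝ) : hellingerIntegral α μ ν ≠ 0 := by
  intro h
  have hzero : ∀ᵐ x ∂ν, μ.rnDeriv ν x ^ α = 0 :=
    (lintegral_eq_zero_iff ((Measure.measurable_rnDeriv μ ν).pow_const α)).mp h
  have hfalse : ∀ᵐ _ ∂μ, False := by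
    filter_upwards [hμν.ae_le hzero, Measure.rnDeriv_pos hμν, hμν.ae_le (μ.rnDeriv_ne_top ν)]
      with x hx hpos hfin
    exact (ENNReal.rpow_pos hpos hfin).ne' hx
  exact NeZero.ne μ (ae_eq_bot.mp (Filter.eventually_false_iff_eq_bot.mp hfalse))

section Pi

lemma lintegral_fin_prod_eq_prod {n : ℕ} {E : Fin n → Type*} [∀ i, MeasurableSpace (E i)]
    (μ : ∀ i, Measure (E i)) [∀ i, SigmaFinite (μ i)] {f : ∀ i, E i → ℝ≥0∞}
    (hf : ∀ i, Measurable (f i)) :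
    ∫⁻ x, ∏ i, f i (x i) ∂(Measure.pi μ) = ∏ i, ∫⁻ x, f i x ∂(μ i) := by
  induction n with
  | zero => simp
  | succ n ih =>
    let μtail (j : Fin n) : Measure (E (Fin.succAbove 0 j)) := μ (Fin.succAbove 0 j)
    let ftail (x : ∀ j, E (Fin.succAbove 0 j)) : ℝ≥0∞ := ∏ j, f (Fin.succAbove 0 j) (x j)
    have hftail : Measurable ftail :=
      Finset.measurable_fun_prod _ fun j _ ↦ (hf _).comp (measurable_pi_apply j)
    calc ∫⁻ x, ∏ i, f i (x i) ∂(Measure.pi μ)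
        = ∫⁻ x, f 0 x.1 * ftail x.2 ∂((μ 0).prod (Measure.pi μtail)) := by
          rw [← (measurePreserving_piFinSuccAbove μ 0).lintegral_comp_emb
            (MeasurableEquiv.measurableEmbedding _)]
          exact lintegral_congr fun x ↦ Fin.prod_univ_succAbove _ 0
      _ = (∫⁻ x, f 0 x ∂(μ 0)) * ∫⁻ x, ftail x ∂(Measure.pi μtail) :=
          lintegral_prod_mul (hf 0).aemeasurable hftail.aemeasurable
      _ = (∫⁻ x, f 0 x ∂(μ 0)) * ∏ j, ∫⁻ x, f (Fin.succAbove 0 j) x ∂(μtail j) := by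
          rw [ih μtail fun j ↦ hf _]
      _ = ∏ i, ∫⁻ x, f i x ∂(μ i) :=
          (Fin.prod_univ_succAbove (fun i ↦ ∫⁻ x, f i x ∂(μ i)) 0).symm

variable {ι : Type*} [Fintype ι]

lemma indicator_univ_pi_prod {E : ι → Type*} {M : Type*} [CommMonoidWithZero M]
    (s : ∀ i, Set (E i)) (f : ∀ i, E i → M) :
    (Set.univ.pi s).indicator (fun x ↦ ∏ i, f i (x i))
      = fun x ↦ ∏ i, (s i).indicator (f i) (x i) := by
  ext x
  by_cases hx : x ∈ Set.univ.pi s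
  · rw [Set.indicator_of_mem hx]
    exact Finset.prod_congr rfl fun i _ ↦ (Set.indicator_of_mem (hx i trivial) _).symm
  · rw [Set.indicator_of_notMem hx]
    obtain ⟨i, hi⟩ : ∃ i, x i ∉ s i := by simpa using hx
    exact (Finset.prod_eq_zero (Finset.mem_univ i) (Set.indicator_of_notMem hi _)).symm

variable {E : ι → Type*} [∀ i, MeasurableSpace (E i)]

lemma lintegral_fintype_prod_eq_prod (μ : ∀ i, Measure (E i)) [∀ i, SigmaFinite (μ i)]
    {f : ∀ i, E i → ℝ≥0∞} (hf : ∀ i, Measurable (f i)) :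
    ∫⁻ x, ∏ i, f i (x i) ∂(Measure.pi μ) = ∏ i, ∫⁻ x, f i x ∂(μ i) := by
  let e := (Fintype.equivFin ι).symm
  rw [← (measurePreserving_piCongrLeft μ e).lintegral_comp_emb
    (MeasurableEquiv.measurableEmbedding _)]
  simp_rw [← e.prod_comp, MeasurableEquiv.coe_piCongrLeft, Equiv.piCongrLeft_apply_apply]
  exact lintegral_fin_prod_eq_prod _ fun i ↦ hf (e i)

lemma pi_withDensity (μ : ∀ i, Measure (E i)) [∀ i, SigmaFinite (μ i)] {f : ∀ i, E i → ℝ≥0∞}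
    (hf : ∀ i, Measurable (f i)) [∀ i, SigmaFinite ((μ i).withDensity (f i))] :
    Measure.pi (fun i ↦ (μ i).withDensity (f i))
      = (Measure.pi μ).withDensity fun x ↦ ∏ i, f i (x i) := by
  refine Measure.pi_eq fun s hs ↦ ?_
  calc (Measure.pi μ).withDensity (fun x ↦ ∏ i, f i (x i)) (Set.univ.pi s)
      = ∫⁻ x, ∏ i, (s i).indicator (f i) (x i) ∂(Measure.pi μ) := by
        rw [withDensity_apply _ (.univ_pi hs), ← lintegral_indicator (.univ_pi hs),
          indicator_univ_pi_prod]
    _ = ∏ i, ∫⁻ x, (s i).indicator (f i) x ∂(μ i) :=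
        lintegral_fintype_prod_eq_prod μ fun i ↦ (hf i).indicator (hs i)
    _ = ∏ i, (μ i).withDensity (f i) (s i) :=
        Finset.prod_congr rfl fun i _ ↦ by
          rw [lintegral_indicator (hs i), withDensity_apply _ (hs i)]

variable {μ ν : ∀ i, Measure (E i)} [∀ i, SigmaFinite (μ i)] [∀ i, SigmaFinite (ν i)]

lemma pi_eq_withDensity_prod_rnDeriv (hμν : ∀ i, μ i ≪ ν i) :
    Measure.pi μ = (Measure.pi ν).withDensity fun x ↦ ∏ i, (μ i).rnDeriv (ν i) (x i) := by
  rw [← pi_withDensity ν fun i ↦ Measure.measurable_rnDeriv (μ i) (ν i)]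
  simp_rw [Measure.withDensity_rnDeriv_eq _ _ (hμν _)]

lemma absolutelyContinuous_pi (hμν : ∀ i, μ i ≪ ν i) : Measure.pi μ ≪ Measure.pi ν := by
  rw [pi_eq_withDensity_prod_rnDeriv hμν]
  exact withDensity_absolutelyContinuous _ _

lemma rnDeriv_pi (hμν : ∀ i, μ i ≪ ν i) :
    (Measure.pi μ).rnDeriv (Measure.pi ν)
      =ᵐ[Measure.pi ν] fun x ↦ ∏ i, (μ i).rnDeriv (ν i) (x i) := by
  rw [pi_eq_withDensity_prod_rnDeriv hμν]
  exact Measure.rnDeriv_withDensity _ (by fun_prop)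

lemma hellingerIntegral_pi (hμν : ∀ i, μ i ≪ ν i) (α : ℝ) :
    hellingerIntegral α (Measure.pi μ) (Measure.pi ν)
      = ∏ i, hellingerIntegral α (μ i) (ν i) := by
  have hfin : ∀ᵐ x ∂(Measure.pi ν), ∀ i, (μ i).rnDeriv (ν i) (x i) ≠ ∞ :=
    Filter.eventually_all.mpr fun i ↦
      Measure.tendsto_eval_ae_ae.eventually ((μ i).rnDeriv_ne_top (ν i))
  calc hellingerIntegral α (Measure.pi μ) (Measure.pi ν)
      = ∫⁻ x, ∏ i, (μ i).rnDeriv (ν i) (x i) ^ α ∂(Measure.pi ν) := by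
        refine lintegral_congr_ae ?_
        filter_upwards [rnDeriv_pi hμν, hfin] with x hx hxfin
        rw [hx, ENNReal.prod_rpow_of_ne_top fun i _ ↦ hxfin i]
    _ = ∏ i, hellingerIntegral α (μ i) (ν i) :=
        lintegral_fintype_prod_eq_prod ν fun i ↦ (Measure.measurable_rnDeriv _ _).pow_const α

lemma renyiDiv_pi [∀ i, NeZero (μ i)] (hμν : ∀ i, μ i ≪ ν i) {α : ℝ}
    (hfin : ∀ i, hellingerIntegral α (μ i) (ν i) ≠ ∞) :
    renyiDiv α (Measure.pi μ) (Measure.pi ν) = ∑ i, renyiDiv α (μ i) (ν i) := by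
  simp_rw [renyiDiv_eq_log_hellingerIntegral]
  rw [hellingerIntegral_pi hμν, ENNReal.toReal_prod, log_prod fun i _ ↦
    ENNReal.toReal_ne_zero.mpr ⟨hellingerIntegral_ne_zero (hμν i) α, hfin i⟩, Finset.mul_sum]

end Pi

section Tilted

variable {Ω : Type*} [MeasurableSpace Ω] {μ : Measure Ω} [SigmaFinite μ] [NeZero μ]
  {X : Ω → ℝ} {α t : ℝ}

lemma hellingerIntegral_tilted_mul (ht : Integrable (fun ω ↦ exp (t * X ω)) μ)
    (hαt : Integrable (fun ω ↦ exp (α * t * X ω)) μ) :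
    hellingerIntegral α (μ.tilted (t * X ·)) μ
      = ENNReal.ofReal (exp (cgf X μ (α * t) - α * cgf X μ t)) := by
  have hmeas : AEMeasurable (fun ω ↦ t * X ω) μ :=
    aemeasurable_of_aemeasurable_exp ht.1.aemeasurable
  calc hellingerIntegral α (μ.tilted (t * X ·)) μ
      = ∫⁻ ω, ENNReal.ofReal (exp (α * t * X ω) / exp (α * cgf X μ t)) ∂μ := by
        refine lintegral_congr_ae ?_
        filter_upwards [rnDeriv_tilted_left_self hmeas] with ω hω
        rw [hω, ← mgf, ← exp_cgf ht, ← exp_sub, ENNReal.ofReal_rpow_of_pos (exp_pos _),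
          ← exp_mul, ← exp_sub]
        ring_nf
    _ = ENNReal.ofReal (exp (cgf X μ (α * t) - α * cgf X μ t)) := by
        rw [← ofReal_integral_eq_lintegral_ofReal (hαt.div_const _)
          (ae_of_all _ fun ω ↦ by positivity), integral_div, ← mgf, exp_sub, exp_cgf hαt]

lemma renyiDiv_tilted_mul (ht : Integrable (fun ω ↦ exp (t * X ω)) μ)
    (hαt : Integrable (fun ω ↦ exp (α * t * X ω)) μ) :
    renyiDiv α (μ.tilted (t * X ·)) μ = (α - 1)⁻¹ * (cgf X μ (α * t) - α * cgf X μ t) := by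
  rw [renyiDiv_eq_log_hellingerIntegral, hellingerIntegral_tilted_mul ht hαt,
    ENNReal.toReal_ofReal (exp_pos _).le, log_exp]

end Tilted

section Gaussian

variable {v : ℝ≥0}

lemma gaussianPDF_mul_exp (hv : v ≠ 0) (b t x : ℝ) :
    gaussianPDF b v x * ENNReal.ofReal (exp (t * x) / exp (b * t + v * t ^ 2 / 2))
      = gaussianPDF (b + v * t) v x := by
  have hv' : (v : ℝ) ≠ 0 := NNReal.coe_ne_zero.mpr hv
  have hsquare : -(x - b) ^ 2 / (2 * v) + (t * x - (b * t + v * t ^ 2 / 2))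
      = -(x - (b + v * t)) ^ 2 / (2 * v) := by
    field_simp
    ring
  rw [gaussianPDF, gaussianPDF, ← ENNReal.ofReal_mul (gaussianPDFReal_nonneg b v x),
    gaussianPDFReal, gaussianPDFReal, ← exp_sub, mul_assoc, ← exp_add, hsquare]

lemma gaussianReal_tilted_mul (b : ℝ) (v : ℝ≥0) (t : ℝ) :
    (gaussianReal b v).tilted (t * ·) = gaussianReal (b + v * t) v := by
  rcases eq_or_ne v 0 with rfl | hv
  · have hdirac : (Measure.dirac b).tilted (t * ·) = Measure.dirac b :=
      (tilted_congr (ae_eq_dirac _)).trans (tilted_const _ (t * b))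
    simpa using hdirac
  · rw [Measure.tilted, ← mgf, mgf_fun_id_gaussianReal, gaussianReal_of_var_ne_zero b hv,
      gaussianReal_of_var_ne_zero _ hv,
      ← withDensity_mul _ (measurable_gaussianPDF b v) (by fun_prop)]
    exact congrArg _ (funext (gaussianPDF_mul_exp hv b t))

lemma gaussianReal_eq_tilted_gaussianReal (hv : v ≠ 0) (a b : ℝ) :
    gaussianReal a v = (gaussianReal b v).tilted ((a - b) / v * ·) := by
  rw [gaussianReal_tilted_mul, mul_div_cancel₀ _ (NNReal.coe_ne_zero.mpr hv), add_sub_cancel]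

lemma gaussianReal_absolutelyContinuous_gaussianReal (hv : v ≠ 0) (a b : ℝ) :
    gaussianReal a v ≪ gaussianReal b v := by
  rw [gaussianReal_eq_tilted_gaussianReal hv a b]
  exact tilted_absolutelyContinuous _ _

lemma hellingerIntegral_gaussianReal_ne_top (hv : v ≠ 0) (a b α : ℝ) :
    hellingerIntegral α (gaussianReal a v) (gaussianReal b v) ≠ ∞ := by
  rw [gaussianReal_eq_tilted_gaussianReal hv a b, hellingerIntegral_tilted_mul
    (integrable_exp_mul_gaussianReal _) (integrable_exp_mul_gaussianReal _)]
  exact ENNReal.ofReal_ne_top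

lemma renyiDiv_gaussianReal (hv : v ≠ 0) (a b : ℝ) {α : ℝ} (hα : α ≠ 1) :
    renyiDiv α (gaussianReal a v) (gaussianReal b v) = α * (a - b) ^ 2 / (2 * v) := by
  have hv' : (v : ℝ) ≠ 0 := NNReal.coe_ne_zero.mpr hv
  have hα' : α - 1 ≠ 0 := sub_ne_zero.mpr hα
  rw [gaussianReal_eq_tilted_gaussianReal hv a b, renyiDiv_tilted_mul
    (integrable_exp_mul_gaussianReal _) (integrable_exp_mul_gaussianReal _)]
  simp_rw [cgf_gaussianReal (μ := b) (v := v) Measure.map_id']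
  field_simp
  ring

end Gaussian

theorem renyiDiv_gaussian_pi_general {ι : Type*} [Fintype ι] {v : ι → ℝ≥0} (hv : ∀ i, v i ≠ 0)
    (m m' : ι → ℝ) {α : ℝ} (hα : α ≠ 1) :
    (Measure.pi fun i ↦ gaussianReal (m i) (v i)) ≪
        (Measure.pi fun i ↦ gaussianReal (m' i) (v i)) ∧
      renyiDiv α (Measure.pi fun i ↦ gaussianReal (m i) (v i))
          (Measure.pi fun i ↦ gaussianReal (m' i) (v i))
        = ∑ i, α * (m i - m' i) ^ 2 / (2 * v i) := by
  have hac (i : ι) : gaussianReal (m i) (v i) ≪ gaussianReal (m' i) (v i) :=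
    gaussianReal_absolutelyContinuous_gaussianReal (hv i) (m i) (m' i)
  refine ⟨absolutelyContinuous_pi hac, ?_⟩
  rw [renyiDiv_pi hac fun i ↦ hellingerIntegral_gaussianReal_ne_top (hv i) (m i) (m' i) α]
  exact Finset.sum_congr rfl fun i _ ↦ renyiDiv_gaussianReal (hv i) (m i) (m' i) hα

/-- Rényi divergence between `k`-dimensional Gaussians with independent coordinates of
common variance `v`: `D_α(μ ‖ ν) = α · (∑ᵢ (mᵢ − m'ᵢ)²) / (2v)`. -/
theorem renyiDiv_gaussian_pi (k : ℕ) (hk : 0 < k) (v : ℝ≥0) (hv : 0 < v)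
    (m m' : Fin k → ℝ) (α : ℝ) (hα : 1 < α) :
    (Measure.pi fun i => gaussianReal (m i) v) ≪ (Measure.pi fun i => gaussianReal (m' i) v) ∧
      renyiDiv α (Measure.pi fun i => gaussianReal (m i) v)
          (Measure.pi fun i => gaussianReal (m' i) v)
        = α * (∑ i, (m i - m' i) ^ 2) / (2 * v) := by
  rw [Finset.mul_sum, Finset.sum_div]
  exact renyiDiv_gaussian_pi_general (fun _ ↦ hv.ne') m m' hα.ne'
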